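/- arXiv:0706.0089 — 2 statements merged into one kernel-verified Lean document; each statement's English description precedes it below -/
import Mathlib

section
/- For n ≥ 4, the center of S̃_n is exactly {1, z}; that is, z is the unique non-trivial central element of S̃_n. -/
open Equiv

/-- Generator `z` as an element of the free group. -/
def zF (n : ℕ) : FreeGroup (Fin (n-1) ⊕ Unit) := FreeGroup.of (Sum.inr ())

/-- Generator `τ̃ᵢ` as an element of the free group. -/
def tF (n : ℕ) (i : Fin (n-1)) : FreeGroup (Fin (n-1) ⊕ Unit) := FreeGroup.of (Sum.inl i)

/-- Relations of the spin extension of the symmetric group. -/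
def spinRels (n : ℕ) : Set (FreeGroup (Fin (n-1) ⊕ Unit)) :=
  {zF n * zF n} ∪
  {w | ∃ i : Fin (n-1), w = zF n * tF n i * (tF n i * zF n)⁻¹} ∪
  {w | ∃ i : Fin (n-1), w = tF n i * tF n i * (zF n)⁻¹} ∪
  {w | ∃ i j : Fin (n-1), 1 < |(i : ℤ) - (j : ℤ)| ∧ w = tF n i * tF n j * (zF n * tF n j * tF n i)⁻¹} ∪
  {w | ∃ i j : Fin (n-1), (j : ℕ) = (i : ℕ) + 1 ∧
        w = tF n i * tF n j * tF n i * (tF n j * tF n i * tF n j)⁻¹}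

/-- The spin extension `S̃ₙ` of the symmetric group, as a presented group. -/
abbrev SpinSym (n : ℕ) := PresentedGroup (spinRels n)

/-- The central element `z` of `S̃ₙ`. -/
def zt (n : ℕ) : SpinSym n := PresentedGroup.of (Sum.inr ())

/-- The generator `τ̃ᵢ` of `S̃ₙ`. -/
def tt (n : ℕ) (i : Fin (n-1)) : SpinSym n := PresentedGroup.of (Sum.inl i)

/-- `i` as an element of `Fin n`. -/
def finL (n : ℕ) (i : Fin (n-1)) : Fin n := ⟨i, by have := i.2; omega⟩

/-- `i+1` as an element of `Fin n`. -/
def finR (n : ℕ) (i : Fin (n-1)) : Fin n := ⟨(i : ℕ) + 1, by have := i.2; omega⟩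

/-- `τ̃ₖ` for a natural number index, `1` out of range. -/
def ttN (n : ℕ) (k : ℕ) : SpinSym n := if h : k < n - 1 then tt n ⟨k, h⟩ else 1

/-- For `i ≤ j`, the word `τ̃ᵢ·τ̃ᵢ₊₁⋯τ̃ⱼ₋₂·τ̃ⱼ₋₁·τ̃ⱼ₋₂⋯τ̃ᵢ₊₁·τ̃ᵢ` (equal to `1` when `i = j`). -/
def ttilCore (n i j : ℕ) : SpinSym n :=
  (((List.range' i (j - i)) ++ (List.range' i (j - 1 - i)).reverse).map (ttN n)).prod

/-- The lifted transpositions `τ̃_{i,j}`, with `τ̃_{j,i} = z·τ̃_{i,j}` for `i < j`,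
and `τ̃_{k,k} = 1`. -/
def ttil (n i j : ℕ) : SpinSym n := if j < i then zt n * ttilCore n j i else ttilCore n i j

/-!
Write `P k` for the subgroup of `S̃ₙ` generated by `z` and `τ̃₀, …, τ̃ₖ₋₁`. Each `τ̃ₖ` normalizes
`P (k - 1)`, so the braid relation yields by induction `P (k + 1) = P k ∪ P k * τ̃ₖ * P k`. In the
quotient `Sₙ`, the image of `P k` fixes the point `k + 1`, which `τ̃ₖ` moves; hence the kernel of
`S̃ₙ → Sₙ` avoids each double coset `P k * τ̃ₖ * P k` and descends to `P 0 = ⟨z⟩`. Since `Sₙ` has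
trivial center, a central element lies in this kernel. Finally `z ≠ 1` because `τ̃ᵢ` can be
represented by the unit `eᵢ - eᵢ₊₁` of a Clifford algebra, with `z = -1`.
-/

section DoubleCoset

variable {G : Type*} [Group G]

open DoubleCoset Subgroup

theorem closure_insert_subset_union_doubleCoset {H : Subgroup G} {s : G} (hss : s * s ∈ H)
    (hsHs : ∀ b ∈ H, s * b * s ∈ (H : Set G) ∪ doubleCoset s H H) :
    (closure (insert s (H : Set G)) : Set G) ⊆ H ∪ doubleCoset s H H := by
  have mul_mem_left : ∀ a ∈ H, ∀ x ∈ (H : Set G) ∪ doubleCoset s H H,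
      a * x ∈ (H : Set G) ∪ doubleCoset s H H := by
    rintro a ha x (hx | hx)
    · exact Or.inl (mul_mem ha hx)
    · obtain ⟨c, hc, d, hd, rfl⟩ := mem_doubleCoset.1 hx
      exact Or.inr (mem_doubleCoset.2 ⟨a * c, mul_mem ha hc, d, hd, by simp only [mul_assoc]⟩)
  have mul_mem_right : ∀ x ∈ (H : Set G) ∪ doubleCoset s H H, ∀ b ∈ H,
      x * b ∈ (H : Set G) ∪ doubleCoset s H H := by
    rintro x (hx | hx) b hb
    · exact Or.inl (mul_mem hx hb)
    · obtain ⟨c, hc, d, hd, rfl⟩ := mem_doubleCoset.1 hx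
      exact Or.inr (mem_doubleCoset.2 ⟨c, hc, d * b, mul_mem hd hb, by simp only [mul_assoc]⟩)
  have mul_s_mem : ∀ x ∈ (H : Set G) ∪ doubleCoset s H H,
      x * s ∈ (H : Set G) ∪ doubleCoset s H H := by
    rintro x (hx | hx)
    · exact mul_mem_left x hx s (Or.inr (mem_doubleCoset_self H H s))
    · obtain ⟨c, hc, d, hd, rfl⟩ := mem_doubleCoset.1 hx
      rw [mul_assoc, mul_assoc, ← mul_assoc s]
      exact mul_mem_left c hc _ (hsHs d hd)
  intro x hx
  induction hx using closure_induction_right with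
  | one => exact Or.inl (one_mem H)
  | mul_right x _ y hy ih =>
    rcases hy with rfl | hy
    · exact mul_s_mem x ih
    · exact mul_mem_right x ih y hy
  | mul_inv_cancel x _ y hy ih =>
    rcases hy with rfl | hy
    · rw [show y⁻¹ = y * (y * y)⁻¹ by group, ← mul_assoc]
      exact mul_mem_right _ (mul_s_mem x ih) _ (inv_mem hss)
    · exact mul_mem_right x ih _ (inv_mem hy)

end DoubleCoset

section SpinRelations

variable {G : Type*} [Group G] {m : ℕ}

/-- The defining relations of the spin extension, for elements `z` and `t 0, …, t (m - 1)` of an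
arbitrary group. For `z = 1` these are the Coxeter relations of type `A`. -/
structure SpinRelations (z : G) (t : Fin m → G) : Prop where
  z_mul_z : z * z = 1
  z_mul_t : ∀ i, z * t i = t i * z
  t_mul_t : ∀ i, t i * t i = z
  t_mul_t_of_far : ∀ i j : Fin m, 1 < |(i : ℤ) - (j : ℤ)| → t i * t j = z * t j * t i
  braid : ∀ i j : Fin m, (j : ℕ) = (i : ℕ) + 1 → t i * t j * t i = t j * t i * t j

/-- The subgroup generated by `z` and `t 0, …, t (k - 1)`, the analogue of the subgroup of the
symmetric group that moves only the first `k + 1` points. -/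
def parabolic (z : G) (t : Fin m → G) (k : ℕ) : Subgroup G :=
  Subgroup.closure (insert z (t '' {i | (i : ℕ) < k}))

variable {z : G} {t : Fin m → G}

open DoubleCoset Subgroup

theorem parabolic_le_iff {k : ℕ} {H : Subgroup G} :
    parabolic z t k ≤ H ↔ z ∈ H ∧ ∀ i : Fin m, (i : ℕ) < k → t i ∈ H := by
  simp [parabolic, closure_le, Set.subset_def]

theorem z_mem_parabolic (k : ℕ) : z ∈ parabolic z t k :=
  (parabolic_le_iff.1 le_rfl).1

theorem t_mem_parabolic {k : ℕ} {i : Fin m} (hik : (i : ℕ) < k) : t i ∈ parabolic z t k :=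
  (parabolic_le_iff.1 le_rfl).2 i hik

theorem parabolic_mono : Monotone (parabolic z t) := fun _ _ hkl =>
  parabolic_le_iff.2 ⟨z_mem_parabolic _, fun _ hik => t_mem_parabolic (hik.trans_le hkl)⟩

theorem parabolic_zero : parabolic z t 0 = zpowers z := by
  simp [parabolic, zpowers_eq_closure]

theorem parabolic_succ_le (k : Fin m) :
    parabolic z t (k + 1) ≤ closure (insert (t k) (parabolic z t k : Set G)) := by
  refine parabolic_le_iff.2 ⟨subset_closure (Or.inr (z_mem_parabolic _)), fun i hik => ?_⟩
  rcases (Nat.lt_succ_iff.1 hik).lt_or_eq with hlt | heq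
  · exact subset_closure (Or.inr (t_mem_parabolic hlt))
  · exact subset_closure (Or.inl (congrArg t (Fin.ext heq)))

namespace SpinRelations

theorem t_inv (h : SpinRelations z t) (i : Fin m) : (t i)⁻¹ = z * t i := by
  rw [inv_eq_iff_mul_eq_one, h.z_mul_t, ← mul_assoc, h.t_mul_t, h.z_mul_z]

theorem t_inv_mul_mul_t_inv (h : SpinRelations z t) {i j : Fin m} (hij : (j : ℕ) = (i : ℕ) + 1) :
    (t j)⁻¹ * t i * (t j)⁻¹ = t i * t j * t i :=
  calc (t j)⁻¹ * t i * (t j)⁻¹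
      = t j * (z * t i) * (z * t j) := by rw [h.t_inv, h.z_mul_t j, mul_assoc (t j)]
    _ = t j * t i * (z * z) * t j := by rw [h.z_mul_t i]; simp only [mul_assoc]
    _ = t i * t j * t i := by rw [h.z_mul_z, mul_one, h.braid i j hij]

theorem t_mul_mul_t_mem_parabolic (h : SpinRelations z t) {k : ℕ} {j : Fin m}
    (hkj : ∀ i < k, i + 1 < (j : ℕ)) {b : G} (hb : b ∈ parabolic z t k) :
    t j * b * t j ∈ parabolic z t k := by
  have hconj : parabolic z t k ≤ (parabolic z t k).comap (MulAut.conj (t j)).toMonoidHom := by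
    refine parabolic_le_iff.2 ⟨?_, fun i hik => ?_⟩
    · simpa [← h.z_mul_t] using z_mem_parabolic k
    · have hfar : 1 < |(j : ℤ) - (i : ℤ)| := lt_abs.2 (Or.inl (by have := hkj i hik; omega))
      simpa [h.t_mul_t_of_far j i hfar] using mul_mem (z_mem_parabolic k) (t_mem_parabolic hik)
  have hsplit : t j * b * t j = t j * b * (t j)⁻¹ * z := by rw [← h.t_mul_t j]; group
  rw [hsplit]
  exact mul_mem (hconj hb) (z_mem_parabolic k)

theorem parabolic_succ_subset (h : SpinRelations z t) (k : Fin m) :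
    (parabolic z t (k + 1) : Set G) ⊆
      parabolic z t k ∪ doubleCoset (t k) (parabolic z t k) (parabolic z t k) := by
  obtain ⟨k, hk⟩ := k
  induction k with
  | zero =>
    refine Set.Subset.trans (SetLike.coe_subset_coe.2 (parabolic_succ_le ⟨0, hk⟩))
      (closure_insert_subset_union_doubleCoset ?_ fun b hb => Or.inl ?_)
    · exact (h.t_mul_t ⟨0, hk⟩).symm ▸ z_mem_parabolic 0
    · exact h.t_mul_mul_t_mem_parabolic (fun i hi => absurd hi i.not_lt_zero) hb
  | succ k ih =>
    set r := t ⟨k, by omega⟩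
    set s := t ⟨k + 1, hk⟩
    have hr : r ∈ parabolic z t (k + 1) := t_mem_parabolic k.lt_succ_self
    have hsbs : ∀ b ∈ parabolic z t k, s * b * s ∈ parabolic z t (k + 1) := fun b hb =>
      parabolic_mono k.le_succ (h.t_mul_mul_t_mem_parabolic (fun i hi => Nat.succ_lt_succ hi) hb)
    refine Set.Subset.trans (SetLike.coe_subset_coe.2 (parabolic_succ_le ⟨k + 1, hk⟩))
      (closure_insert_subset_union_doubleCoset ?_ fun b hb => ?_)
    · exact (h.t_mul_t ⟨k + 1, hk⟩).symm ▸ z_mem_parabolic (k + 1)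
    rcases ih (by omega) hb with hb | hb
    · exact Or.inl (hsbs b hb)
    · obtain ⟨c, hc, d, hd, rfl⟩ := mem_doubleCoset.1 hb
      refine Or.inr (mem_doubleCoset.2
        ⟨s * c * s * r, mul_mem (hsbs c hc) hr, r * (s * d * s), mul_mem hr (hsbs d hd), ?_⟩)
      calc s * (c * r * d) * s
          = s * c * s * (s⁻¹ * r * s⁻¹) * (s * d * s) := by group
        _ = s * c * s * (r * s * r) * (s * d * s) := by rw [h.t_inv_mul_mul_t_inv rfl]
        _ = s * c * s * r * s * (r * (s * d * s)) := by group

theorem mem_zpowers_of_map_eq_one (h : SpinRelations z t) {K : Type*} [Group K] {f : G →* K}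
    (hf : ∀ k : Fin m, f (t k) ∉ (parabolic z t k).map f) {k : ℕ} (hk : k ≤ m) {g : G}
    (hg : g ∈ parabolic z t k) (hfg : f g = 1) : g ∈ zpowers z := by
  induction k with
  | zero => rwa [← parabolic_zero (t := t)]
  | succ k ih =>
    rcases h.parabolic_succ_subset ⟨k, hk⟩ hg with hg | hg
    · exact ih (by omega) hg
    · obtain ⟨a, ha, b, hb, rfl⟩ := mem_doubleCoset.1 hg
      have hft : f (a⁻¹ * b⁻¹) = f (t ⟨k, hk⟩) :=
        calc f (a⁻¹ * b⁻¹) = f a⁻¹ * f (a * t ⟨k, hk⟩ * b) * f b⁻¹ := by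
              rw [hfg, mul_one, map_mul]
          _ = f (t ⟨k, hk⟩) := by rw [← map_mul, ← map_mul]; congr 1; group
      exact absurd ⟨a⁻¹ * b⁻¹, mul_mem (inv_mem ha) (inv_mem hb), hft⟩ (hf ⟨k, hk⟩)

theorem mem_zpowers_z_iff (h : SpinRelations z t) {g : G} : g ∈ zpowers z ↔ g = 1 ∨ g = z := by
  refine ⟨fun hg => ?_, ?_⟩
  · obtain ⟨k, rfl⟩ := mem_zpowers_iff.1 hg
    have hz : z ^ (2 : ℤ) = 1 := by rw [zpow_two, h.z_mul_z]
    rcases Int.even_or_odd' k with ⟨l, rfl | rfl⟩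
    · exact Or.inl (by rw [zpow_mul, hz, one_zpow])
    · exact Or.inr (by rw [zpow_add_one, zpow_mul, hz, one_zpow, one_mul])
  · rintro (rfl | rfl)
    · exact one_mem _
    · exact mem_zpowers g

end SpinRelations

end SpinRelations

section Presentation

variable {n : ℕ}

theorem spinRelations_zt_tt (n : ℕ) : SpinRelations (zt n) (tt n) where
  z_mul_z := PresentedGroup.one_of_mem (Or.inl <| Or.inl <| Or.inl <| Or.inl rfl)
  z_mul_t i := PresentedGroup.mk_eq_mk_of_mul_inv_mem
    (Or.inl <| Or.inl <| Or.inl <| Or.inr ⟨i, rfl⟩)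
  t_mul_t i := PresentedGroup.mk_eq_mk_of_mul_inv_mem (Or.inl <| Or.inl <| Or.inr ⟨i, rfl⟩)
  t_mul_t_of_far i j hij := PresentedGroup.mk_eq_mk_of_mul_inv_mem
    (Or.inl <| Or.inr ⟨i, j, hij, rfl⟩)
  braid i j hij := PresentedGroup.mk_eq_mk_of_mul_inv_mem (Or.inr ⟨i, j, hij, rfl⟩)

theorem mem_of_zt_mem_of_tt_mem {H : Subgroup (SpinSym n)} (hz : zt n ∈ H)
    (ht : ∀ i, tt n i ∈ H) (g : SpinSym n) : g ∈ H :=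
  PresentedGroup.generated_by (spinRels n) H (by rintro (i | _); exacts [ht i, hz]) g

theorem mem_parabolic_zt_tt (g : SpinSym n) : g ∈ parabolic (zt n) (tt n) (n - 1) :=
  mem_of_zt_mem_of_tt_mem (z_mem_parabolic _) (fun i => t_mem_parabolic i.2) g

theorem zt_mem_center (n : ℕ) : zt n ∈ Subgroup.center (SpinSym n) := by
  refine Subgroup.mem_center_iff.2 fun g => Subgroup.mem_centralizer_singleton_iff.1 ?_
  refine mem_of_zt_mem_of_tt_mem ?_ (fun i => ?_) g
  · exact Subgroup.mem_centralizer_singleton_iff.2 rfl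
  · exact Subgroup.mem_centralizer_singleton_iff.2 ((spinRelations_zt_tt n).z_mul_t i).symm

variable {H : Type*} [Group H] {z : H} {t : Fin (n - 1) → H}

theorem SpinRelations.freeGroup_lift_eq_one (h : SpinRelations z t)
    {r : FreeGroup (Fin (n - 1) ⊕ Unit)} (hr : r ∈ spinRels n) :
    FreeGroup.lift (Sum.elim t fun _ => z) r = 1 := by
  obtain ((((rfl | ⟨i, rfl⟩) | ⟨i, rfl⟩) | ⟨i, j, hij, rfl⟩) | ⟨i, j, hij, rfl⟩) := hr
  · simp [zF, h.z_mul_z]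
  · simp [zF, tF, h.z_mul_t]
  · simp [zF, tF, h.t_mul_t]
  · simp [zF, tF, h.t_mul_t_of_far i j hij]
  · simp [tF, h.braid i j hij]

/-- The homomorphism out of the spin extension given by its universal property. -/
def SpinRelations.lift (h : SpinRelations z t) : SpinSym n →* H :=
  PresentedGroup.toGroup fun _ => h.freeGroup_lift_eq_one

theorem SpinRelations.lift_zt (h : SpinRelations z t) : h.lift (zt n) = z :=
  PresentedGroup.toGroup.of _

theorem SpinRelations.lift_tt (h : SpinRelations z t) (i : Fin (n - 1)) : h.lift (tt n i) = t i :=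
  PresentedGroup.toGroup.of _

end Presentation

section Clifford

open CliffordAlgebra QuadraticMap

variable {R M : Type*} [CommRing R] [AddCommGroup M] [Module R M] {Q : QuadraticForm R M}

/-- A vector on which the quadratic form is `-1`, as a unit of the Clifford algebra. -/
def cliffordUnit (x : M) (hx : Q x = -1) : (CliffordAlgebra Q)ˣ where
  val := ι Q x
  inv := -ι Q x
  val_inv := by simp [hx]
  inv_val := by simp [hx]

theorem spinRelations_cliffordUnit {m : ℕ} {v : Fin m → M} (hv : ∀ i, Q (v i) = -1)
    (hfar : ∀ i j : Fin m, 1 < |(i : ℤ) - (j : ℤ)| → Q.IsOrtho (v i) (v j))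
    (hsucc : ∀ i j : Fin m, (j : ℕ) = (i : ℕ) + 1 → polar Q (v i) (v j) = 1) :
    SpinRelations (-1) fun i => cliffordUnit (v i) (hv i) where
  z_mul_z := by simp
  z_mul_t i := by simp
  t_mul_t i := Units.ext (by simp [cliffordUnit, hv])
  t_mul_t_of_far i j hij := Units.ext (by
    simp [cliffordUnit, ι_mul_ι_comm_of_isOrtho (hfar i j hij)])
  braid i j hij := Units.ext (by
    simp only [cliffordUnit, Units.val_mul, ι_mul_ι_mul_ι, hv, polar_comm Q (v j),
      hsucc i j hij]
    congr 1
    module)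

/-- The form `-(1/2) ∑ xᵢ²`, scaled so that the vectors `eᵢ - eᵢ₊₁` take the value `-1`. -/
def spinForm (n : ℕ) : QuadraticForm ℚ (Fin n → ℚ) :=
  weightedSumSquares ℚ fun _ => (-(1 / 2) : ℚ)

/-- The simple root `eᵢ - eᵢ₊₁` of type `A`. -/
def simpleRoot (n : ℕ) (i : Fin (n - 1)) : Fin n → ℚ :=
  Pi.single (finL n i) 1 - Pi.single (finR n i) 1

theorem spinForm_apply {n : ℕ} (x : Fin n → ℚ) : spinForm n x = -(1 / 2) * x ⬝ᵥ x := by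
  simp [spinForm, weightedSumSquares_apply, dotProduct, Finset.mul_sum]

theorem polar_spinForm {n : ℕ} (x y : Fin n → ℚ) : polar (spinForm n) x y = -(x ⬝ᵥ y) := by
  simp only [polar, spinForm_apply, add_dotProduct, dotProduct_add, dotProduct_comm y x]
  ring

theorem simpleRoot_dotProduct {n : ℕ} (i : Fin (n - 1)) (x : Fin n → ℚ) :
    simpleRoot n i ⬝ᵥ x = x (finL n i) - x (finR n i) := by
  simp [simpleRoot, sub_dotProduct]

theorem spinForm_simpleRoot {n : ℕ} (i : Fin (n - 1)) : spinForm n (simpleRoot n i) = -1 := by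
  rw [spinForm_apply, simpleRoot_dotProduct]
  norm_num [simpleRoot, finL, finR]

theorem isOrtho_simpleRoot {n : ℕ} {i j : Fin (n - 1)} (hij : 1 < |(i : ℤ) - (j : ℤ)|) :
    (spinForm n).IsOrtho (simpleRoot n i) (simpleRoot n j) := by
  have h_eq : (i : ℕ) ≠ j := by grind
  have h_succ : (i : ℕ) ≠ j + 1 := by grind
  have h_pred : (i : ℕ) + 1 ≠ j := by grind
  rw [← isOrtho_polarBilin, polarBilin_apply_apply, polar_spinForm, simpleRoot_dotProduct]
  simp [simpleRoot, finL, finR, h_eq, h_succ, h_pred]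

theorem polar_simpleRoot_succ {n : ℕ} {i j : Fin (n - 1)} (hij : (j : ℕ) = (i : ℕ) + 1) :
    polar (spinForm n) (simpleRoot n i) (simpleRoot n j) = 1 := by
  have h_ne : (i : ℕ) ≠ i + 1 + 1 := by omega
  rw [polar_spinForm, simpleRoot_dotProduct]
  simp [simpleRoot, finL, finR, hij, h_ne]

theorem zt_ne_one (n : ℕ) : zt n ≠ 1 := by
  have hrel := spinRelations_cliffordUnit spinForm_simpleRoot
    (fun _ _ => isOrtho_simpleRoot (n := n)) (fun _ _ => polar_simpleRoot_succ)
  have : Invertible (2 : ℚ) := invertibleOfNonzero two_ne_zero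
  intro h
  have hneg : (-1 : (CliffordAlgebra (spinForm n))ˣ) = 1 := by rw [← hrel.lift_zt, h, map_one]
  have hrat : (-1 : ℚ) = 1 := (algebraMap ℚ (CliffordAlgebra (spinForm n))).injective
    (by simpa using congrArg Units.val hneg)
  norm_num at hrat

end Clifford

section Permutations

theorem center_perm_eq_bot {α : Type*} (hα : 3 ≤ Cardinal.mk α) :
    Subgroup.center (Perm α) = ⊥ := by
  classical
  refine (Subgroup.eq_bot_iff_forall _).2 fun σ hσ => Equiv.ext fun a => ?_
  by_contra hσa
  rw [Perm.one_apply] at hσa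
  obtain ⟨c, hca, hcσ⟩ := Cardinal.exists_ne_ne_of_three_le hα a (σ a)
  have hcomm : (swap (σ a) c * σ) a = (σ * swap (σ a) c) a := by
    rw [Subgroup.mem_center_iff.1 hσ]
  rw [Perm.mul_apply, Perm.mul_apply, swap_apply_left,
    swap_apply_of_ne_of_ne (Ne.symm hσa) hca.symm] at hcomm
  exact hcσ hcomm

theorem swap_mul_swap_mul_swap_comm {α : Type*} [DecidableEq α] {a b c : α} (hab : a ≠ b)
    (hac : a ≠ c) (hbc : b ≠ c) :
    swap a b * swap b c * swap a b = swap b c * swap a b * swap b c :=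
  calc swap a b * swap b c * swap a b
      = swap b a * swap c b * swap b a := by rw [swap_comm a b, swap_comm b c]
    _ = swap c a := by rw [swap_mul_swap_mul_swap hbc.symm hac.symm, swap_comm]
    _ = swap b c * swap a b * swap b c := (swap_mul_swap_mul_swap hab hac).symm

theorem spinRelations_swap (n : ℕ) :
    SpinRelations 1 fun i : Fin (n - 1) => swap (finL n i) (finR n i) where
  z_mul_z := mul_one 1
  z_mul_t i := by simp
  t_mul_t i := swap_mul_self _ _
  t_mul_t_of_far i j hij := by
    rw [one_mul]
    refine (Perm.disjoint_swap_swap ?_).commute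
    simp only [finL, finR, List.nodup_cons, List.mem_cons, Fin.mk.injEq]
    grind
  braid i j hij := by
    have hadj : finR n i = finL n j := Fin.ext hij.symm
    rw [hadj]
    exact swap_mul_swap_mul_swap_comm (by simp [finL, hij]) (Fin.ne_of_val_ne (by
      simp only [finL, finR]; omega)) (by simp [finL, finR])

/-- The projection of the spin extension onto the symmetric group, sending `τ̃ᵢ` to the adjacent
transposition `(i, i + 1)`. -/
def toPerm (n : ℕ) : SpinSym n →* Perm (Fin n) := (spinRelations_swap n).lift

variable {n : ℕ}

theorem toPerm_tt (i : Fin (n - 1)) : toPerm n (tt n i) = swap (finL n i) (finR n i) :=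
  (spinRelations_swap n).lift_tt i

theorem toPerm_zt : toPerm n (zt n) = 1 := (spinRelations_swap n).lift_zt

theorem toPerm_surjective : Function.Surjective (toPerm n) := by
  obtain _ | n := n
  · exact fun σ => ⟨1, Subsingleton.elim _ _⟩
  rw [← MonoidHom.mrange_eq_top, eq_top_iff, ← Perm.mclosure_swap_castSucc_succ n,
    Submonoid.closure_le]
  rintro _ ⟨i, rfl⟩
  exact ⟨tt (n + 1) i, toPerm_tt (n := n + 1) i⟩

theorem toPerm_apply_finR_of_mem_parabolic (k : Fin (n - 1)) {g : SpinSym n}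
    (hg : g ∈ parabolic (zt n) (tt n) k) : toPerm n g (finR n k) = finR n k := by
  suffices parabolic (zt n) (tt n) k ≤
      (MulAction.stabilizer (Perm (Fin n)) (finR n k)).comap (toPerm n) from this hg
  refine parabolic_le_iff.2 ⟨?_, fun i hik => ?_⟩
  · rw [Subgroup.mem_comap, toPerm_zt]
    exact one_mem _
  · rw [Subgroup.mem_comap, toPerm_tt, MulAction.mem_stabilizer_iff, Perm.smul_def]
    exact swap_apply_of_ne_of_ne (Fin.ne_of_val_ne (by simp only [finL, finR]; omega))
      (Fin.ne_of_val_ne (by simp only [finR]; omega))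

theorem toPerm_tt_notMem_map_parabolic (k : Fin (n - 1)) :
    toPerm n (tt n k) ∉ (parabolic (zt n) (tt n) k).map (toPerm n) := by
  rintro ⟨g, hg, hgk⟩
  have hfix : finL n k = finR n k := by
    rw [← toPerm_apply_finR_of_mem_parabolic k hg, hgk, toPerm_tt, swap_apply_right]
  simp [finL, finR] at hfix

theorem ker_toPerm_le : (toPerm n).ker ≤ Subgroup.zpowers (zt n) := fun g hg =>
  (spinRelations_zt_tt n).mem_zpowers_of_map_eq_one toPerm_tt_notMem_map_parabolic le_rfl
    (mem_parabolic_zt_tt g) hg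

end Permutations

theorem center_spinSym_eq_zpowers {n : ℕ} (hn : 3 ≤ n) :
    Subgroup.center (SpinSym n) = Subgroup.zpowers (zt n) := by
  refine le_antisymm (fun g hg => ker_toPerm_le ?_) (Subgroup.zpowers_le.2 (zt_mem_center n))
  have hmem : toPerm n g ∈ Subgroup.center (Perm (Fin n)) := by
    refine Subgroup.mem_center_iff.2 fun σ => ?_
    obtain ⟨x, rfl⟩ := toPerm_surjective σ
    rw [← map_mul, ← map_mul, Subgroup.mem_center_iff.1 hg]
  rwa [center_perm_eq_bot (by simpa using hn), Subgroup.mem_bot] at hmem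

theorem center_eq_general (n : ℕ) (hn : 3 ≤ n) :
    zt n ≠ 1 ∧ ∀ g : SpinSym n, g ∈ Subgroup.center (SpinSym n) ↔ g = 1 ∨ g = zt n :=
  ⟨zt_ne_one n, fun g => by
    rw [center_spinSym_eq_zpowers hn, (spinRelations_zt_tt n).mem_zpowers_z_iff]⟩

theorem center_eq (n : ℕ) (hn : 4 ≤ n) :
    zt n ≠ 1 ∧ ∀ g : SpinSym n, g ∈ Subgroup.center (SpinSym n) ↔ g = 1 ∨ g = zt n :=
  center_eq_general n (by omega)
end

section
/- Let n ≥ 2. For every element x̃ ∈ S̃_n, writing x = p(x̃) ∈ S_n, and for all 0 ≤ i ≠ j ≤ n−1, one has x̃ · τ̃_{i,j} · x̃^{−1} = z^{ε(x)} · τ̃_{x(i), x(j)}, where ε(x) ∈ {0,1} is determined by sign(x) = (−1)^{ε(x)}. -/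
open Equiv

/-!
Since `τ̃ₖ⁻¹ = z τ̃ₖ`, the sign in the formula disappears if conjugation by `τ̃ₖ` is replaced by
`σₖ y = τ̃ₖ y τ̃ₖ`: the claim for a generator becomes `σₖ τ̃_{i,j} = τ̃_{sₖ i, sₖ j}`, where `sₖ` is
the transposition `(k, k + 1)`. Two signs cancel in `σₖ ∘ σₖ` and in `σₖ ∘ σₗ`, so the `σₖ` are
involutions that commute when far apart and satisfy the braid relation, and
`τ̃_{i,j} = σᵢ σᵢ₊₁ ⋯ σⱼ₋₂ τ̃ⱼ₋₁`; moving `σₖ` through this word proves the claim. Finally,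
`x ↦ (y ↦ z ^ ε(x) · x y x⁻¹)` is an action of `S̃ₙ` on itself in which `τ̃ₖ` acts as `σₖ`, so the
equivariance passes from the generators to all of `S̃ₙ`.
-/

theorem zt_mul_self (n : ℕ) : zt n * zt n = 1 :=
  PresentedGroup.one_of_mem (x := zF n * zF n) <| .inl <| .inl <| .inl <| .inl rfl

theorem zt_mul_tt (n : ℕ) (k : Fin (n - 1)) : zt n * tt n k = tt n k * zt n :=
  PresentedGroup.mk_eq_mk_of_mul_inv_mem (x := zF n * tF n k) (y := tF n k * zF n) <|
    .inl <| .inl <| .inl <| .inr ⟨k, rfl⟩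

theorem tt_mul_self (n : ℕ) (k : Fin (n - 1)) : tt n k * tt n k = zt n :=
  PresentedGroup.mk_eq_mk_of_mul_inv_mem (x := tF n k * tF n k) (y := zF n) <|
    .inl <| .inl <| .inr ⟨k, rfl⟩

theorem tt_mul_tt_of_far (n : ℕ) (k l : Fin (n - 1)) (h : 1 < |(k : ℤ) - (l : ℤ)|) :
    tt n k * tt n l = zt n * tt n l * tt n k :=
  PresentedGroup.mk_eq_mk_of_mul_inv_mem (x := tF n k * tF n l) (y := zF n * tF n l * tF n k) <|
    .inl <| .inr ⟨k, l, h, rfl⟩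

theorem tt_braid (n : ℕ) (k l : Fin (n - 1)) (h : (l : ℕ) = k + 1) :
    tt n k * tt n l * tt n k = tt n l * tt n k * tt n l :=
  PresentedGroup.mk_eq_mk_of_mul_inv_mem
    (x := tF n k * tF n l * tF n k) (y := tF n l * tF n k * tF n l) <| .inr ⟨k, l, h, rfl⟩

theorem SpinSym.induction_on {n : ℕ} {P : SpinSym n → Prop} (x : SpinSym n)
    (zt : P (zt n)) (tt : ∀ k, P (tt n k)) (one : P 1)
    (mul : ∀ x y, P x → P y → P (x * y)) (inv : ∀ x, P x → P x⁻¹) : P x := by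
  have hx : x ∈ Subgroup.closure (Set.range (PresentedGroup.of (rels := spinRels n))) := by
    simp only [PresentedGroup.closure_range_of, Subgroup.mem_top]
  induction hx using Subgroup.closure_induction with
  | mem _ h =>
    obtain ⟨k | _, rfl⟩ := h
    exacts [tt k, zt]
  | one => exact one
  | mul x y _ _ hx hy => exact mul x y hx hy
  | inv x _ hx => exact inv x hx

theorem zt_commute {n : ℕ} (x : SpinSym n) : Commute (zt n) x := by
  induction x using SpinSym.induction_on with
  | zt => exact .refl _
  | tt k => exact zt_mul_tt n k
  | one => exact .one_right _
  | mul _ _ hx hy => exact hx.mul_right hy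
  | inv _ hx => exact hx.inv_right

theorem zt_mul_mul_zt {n : ℕ} (x : SpinSym n) : zt n * x * zt n = x := by
  rw [(zt_commute x).eq, mul_assoc, zt_mul_self, mul_one]

theorem zt_mul_mul_zt_mul {n : ℕ} (x y w : SpinSym n) :
    zt n * x * y * (zt n * w) = x * y * w := by
  rw [mul_assoc (zt n), ← mul_assoc _ (zt n), zt_mul_mul_zt]

theorem ttN_of_lt {n k : ℕ} (hk : k + 1 < n) : ttN n k = tt n ⟨k, by omega⟩ :=
  dif_pos _

theorem ttN_mul_self {n k : ℕ} (hk : k + 1 < n) : ttN n k * ttN n k = zt n := by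
  rw [ttN_of_lt hk, tt_mul_self]

theorem ttN_mul_ttN_of_far {n k l : ℕ} (hk : k + 1 < n) (hl : l + 1 < n)
    (h : k + 1 < l ∨ l + 1 < k) : ttN n k * ttN n l = zt n * (ttN n l * ttN n k) := by
  rw [ttN_of_lt hk, ttN_of_lt hl, tt_mul_tt_of_far _ _ _ (by rw [lt_abs]; lia), mul_assoc]

theorem ttN_braid {n k : ℕ} (hk : k + 2 < n) :
    ttN n k * ttN n (k + 1) * ttN n k = ttN n (k + 1) * ttN n k * ttN n (k + 1) := by
  rw [ttN_of_lt (by omega : k + 1 < n), ttN_of_lt hk, tt_braid _ _ _ rfl]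

/-- The map `y ↦ τ̃ₖ y τ̃ₖ`. Since `τ̃ₖ⁻¹ = z τ̃ₖ`, it is conjugation by `τ̃ₖ` followed by
multiplication by `z`, that is, conjugation twisted by the sign of `τ̃ₖ`. -/
def sandwich (n k : ℕ) (y : SpinSym n) : SpinSym n := ttN n k * y * ttN n k

theorem sandwich_eq_zt_mul_conj {n k : ℕ} (hk : k + 1 < n) (y : SpinSym n) :
    sandwich n k y = zt n * (ttN n k * y * (ttN n k)⁻¹) := by
  rw [(zt_commute _).eq, ← ttN_mul_self hk]
  simp only [sandwich, mul_assoc, inv_mul_cancel_left]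

theorem sandwich_involutive {n k : ℕ} (hk : k + 1 < n) :
    Function.Involutive (sandwich n k) := fun y => by
  calc
    _ = ttN n k * ttN n k * y * (ttN n k * ttN n k) := by simp only [sandwich, mul_assoc]
    _ = y := by rw [ttN_mul_self hk, zt_mul_mul_zt]

theorem sandwich_zt_mul (n k : ℕ) (y : SpinSym n) :
    sandwich n k (zt n * y) = zt n * sandwich n k y := by
  simp only [sandwich, ← mul_assoc, (zt_commute (ttN n k)).eq]

theorem sandwich_comm {n k l : ℕ} (hk : k + 1 < n) (hl : l + 1 < n)
    (h : k + 1 < l ∨ l + 1 < k) (y : SpinSym n) :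
    sandwich n k (sandwich n l y) = sandwich n l (sandwich n k y) := by
  calc
    _ = ttN n k * ttN n l * y * (ttN n l * ttN n k) := by simp only [sandwich, mul_assoc]
    _ = zt n * (ttN n l * ttN n k) * y * (zt n * (ttN n k * ttN n l)) := by
      congr 1
      · rw [ttN_mul_ttN_of_far hk hl h]
      · rw [ttN_mul_ttN_of_far hl hk h.symm]
    _ = _ := by
      rw [zt_mul_mul_zt_mul]
      simp only [sandwich, mul_assoc]

theorem sandwich_braid {n k : ℕ} (hk : k + 2 < n) (y : SpinSym n) :
    sandwich n k (sandwich n (k + 1) (sandwich n k y)) =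
      sandwich n (k + 1) (sandwich n k (sandwich n (k + 1) y)) := by
  calc
    _ = ttN n k * ttN n (k + 1) * ttN n k * y * (ttN n k * ttN n (k + 1) * ttN n k) := by
      simp only [sandwich, mul_assoc]
    _ = _ := by simp only [ttN_braid hk, sandwich, mul_assoc]

theorem sandwich_ttN_self {n k : ℕ} (hk : k + 1 < n) :
    sandwich n k (ttN n k) = zt n * ttN n k := by
  rw [sandwich, ttN_mul_self hk]

theorem sandwich_ttN_of_far {n k l : ℕ} (hk : k + 1 < n) (hl : l + 1 < n)
    (h : k + 1 < l ∨ l + 1 < k) : sandwich n k (ttN n l) = ttN n l := by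
  rw [sandwich, ttN_mul_ttN_of_far hk hl h, ← mul_assoc, mul_assoc, ttN_mul_self hk, zt_mul_mul_zt]

theorem sandwich_succ_ttN {n k : ℕ} (hk : k + 2 < n) :
    sandwich n (k + 1) (ttN n k) = sandwich n k (ttN n (k + 1)) :=
  (ttN_braid hk).symm

theorem ttilCore_succ (n i : ℕ) : ttilCore n i (i + 1) = ttN n i := by
  simp [ttilCore]

theorem ttilCore_eq_sandwich {n i j : ℕ} (h : i + 1 < j) :
    ttilCore n i j = sandwich n i (ttilCore n (i + 1) j) := by
  obtain ⟨d, rfl⟩ := Nat.exists_eq_add_of_le h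
  have ascent : i + 2 + d - i = d + 1 + 1 := by omega
  have descent : i + 2 + d - 1 - i = d + 1 := by omega
  have ascent_tail : i + 2 + d - (i + 1) = d + 1 := by omega
  have descent_tail : i + 2 + d - 1 - (i + 1) = d := by omega
  simp only [ttilCore, sandwich, ascent, descent, ascent_tail, descent_tail,
    List.range'_succ (s := i), List.reverse_cons, List.map_append, List.map_cons, List.map_nil,
    List.prod_append, List.prod_cons, List.prod_nil, mul_assoc, mul_one]

theorem sandwich_ttilCore_of_far {n i j k : ℕ} (hij : i ≤ j) (hj : j + 1 < n) (hk : k + 1 < n)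
    (h : k + 1 < i ∨ j + 1 < k) : sandwich n k (ttilCore n i (j + 1)) = ttilCore n i (j + 1) := by
  induction hij using Nat.decreasingInduction with
  | self => rw [ttilCore_succ, sandwich_ttN_of_far hk hj h]
  | of_succ i hij ih =>
    rw [ttilCore_eq_sandwich (by omega), sandwich_comm hk (by omega) (by omega), ih (by omega)]

theorem sandwich_succ_ttilCore {n i j : ℕ} (hij : i ≤ j) (hj : j + 2 < n) :
    sandwich n (j + 1) (ttilCore n i (j + 1)) = ttilCore n i (j + 2) := by
  induction hij using Nat.decreasingInduction with
  | self =>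
    rw [ttilCore_succ, sandwich_succ_ttN hj, ttilCore_eq_sandwich (by omega), ttilCore_succ]
  | of_succ i hij ih =>
    rw [ttilCore_eq_sandwich (by omega), sandwich_comm hj (by omega) (by omega), ih,
      ← ttilCore_eq_sandwich (by omega)]

theorem sandwich_ttilCore_of_between {n i j k : ℕ} (hik : i ≤ k) (hkj : k + 1 < j)
    (hj : j + 1 < n) : sandwich n (k + 1) (ttilCore n i (j + 1)) = ttilCore n i (j + 1) := by
  induction hik using Nat.decreasingInduction with
  | self =>
    rw [ttilCore_eq_sandwich (by omega), ttilCore_eq_sandwich (by omega),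
      ← sandwich_braid (by omega), sandwich_ttilCore_of_far (by omega) hj (by omega) (by omega)]
  | of_succ i hik ih =>
    rw [ttilCore_eq_sandwich (by omega), sandwich_comm (by omega) (by omega) (by omega), ih]

theorem ttil_of_lt {n i j : ℕ} (h : i < j) : ttil n i j = ttilCore n i j :=
  if_neg h.not_gt

theorem ttil_of_gt {n i j : ℕ} (h : j < i) : ttil n i j = zt n * ttil n j i := by
  rw [ttil_of_lt h, ttil, if_pos h]

theorem ttil_symm {n i j : ℕ} (h : i ≠ j) : ttil n i j = zt n * ttil n j i := by
  rcases h.lt_or_gt with h | h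
  · rw [ttil_of_gt h, ← mul_assoc, zt_mul_self, one_mul]
  · exact ttil_of_gt h

theorem sandwich_ttil_of_lt {n k i j : ℕ} (hk : k + 1 < n) (hj : j < n) (hij : i < j) :
    sandwich n k (ttil n i j) = ttil n (swap k (k + 1) i) (swap k (k + 1) j) := by
  obtain ⟨j, rfl⟩ : ∃ m, j = m + 1 := ⟨j - 1, by omega⟩
  rw [ttil_of_lt hij]
  obtain ⟨rfl, rfl⟩ | ⟨rfl, h⟩ | rfl | rfl | ⟨rfl, h⟩ | ⟨hi, hi', hj, hj'⟩ :
      (k = i ∧ j = i) ∨ (k = i ∧ i < j) ∨ i = k + 1 ∨ k = j + 1 ∨ (k = j ∧ i < j) ∨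
        (i ≠ k ∧ i ≠ k + 1 ∧ j + 1 ≠ k ∧ j + 1 ≠ k + 1) := by omega
  · rw [swap_apply_left, swap_apply_right, ttil_of_gt hij, ttil_of_lt hij, ttilCore_succ,
      sandwich_ttN_self hk]
  · rw [swap_apply_left, swap_apply_of_ne_of_ne (by omega) (by omega), ttil_of_lt (by omega),
      ttilCore_eq_sandwich (by omega), sandwich_involutive hk]
  · rw [swap_apply_right, swap_apply_of_ne_of_ne (by omega) (by omega), ttil_of_lt (by omega),
      ttilCore_eq_sandwich (i := k) (by omega)]
  · rw [swap_apply_left, swap_apply_of_ne_of_ne (by omega) (by omega), ttil_of_lt (by omega),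
      sandwich_succ_ttilCore (by omega) hk]
  · obtain ⟨m, rfl⟩ : ∃ m, k = m + 1 := ⟨k - 1, by omega⟩
    rw [swap_apply_right, swap_apply_of_ne_of_ne (by omega) (by omega), ttil_of_lt (by omega),
      ← sandwich_succ_ttilCore (by omega) hk, sandwich_involutive hk]
  · rw [swap_apply_of_ne_of_ne hi hi', swap_apply_of_ne_of_ne hj hj', ttil_of_lt hij]
    by_cases hbetween : i < k ∧ k < j
    · obtain ⟨m, rfl⟩ : ∃ m, k = m + 1 := ⟨k - 1, by omega⟩
      exact sandwich_ttilCore_of_between (by omega) hbetween.2 (by omega)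
    · exact sandwich_ttilCore_of_far (by omega) (by omega) hk (by omega)

theorem sandwich_ttil {n k i j : ℕ} (hk : k + 1 < n) (hi : i < n) (hj : j < n) (hij : i ≠ j) :
    sandwich n k (ttil n i j) = ttil n (swap k (k + 1) i) (swap k (k + 1) j) := by
  rcases hij.lt_or_gt with h | h
  · exact sandwich_ttil_of_lt hk hj h
  · rw [ttil_symm hij, sandwich_zt_mul, sandwich_ttil_of_lt hk hi h,
      ← ttil_symm ((swap k (k + 1)).injective.ne hij)]

/-- The homomorphism `(-1) ^ ε ↦ z ^ ε`, for `ε ∈ {0, 1}`, with central values. -/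
def ztOfUnits (n : ℕ) : ℤˣ →* SpinSym n where
  toFun u := zt n ^ (if u = 1 then 0 else 1)
  map_one' := by simp
  map_mul' u v := by
    rcases Int.units_eq_one_or u with rfl | rfl <;> rcases Int.units_eq_one_or v with rfl | rfl <;>
      simp [zt_mul_self]

theorem ztOfUnits_apply (n : ℕ) (u : ℤˣ) : ztOfUnits n u = zt n ^ (if u = 1 then 0 else 1) := rfl

theorem ztOfUnits_neg_one (n : ℕ) : ztOfUnits n (-1) = zt n := by
  simp [ztOfUnits_apply]

theorem ztOfUnits_mul_self (n : ℕ) (u : ℤˣ) : ztOfUnits n u * ztOfUnits n u = 1 := by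
  rw [← map_mul, Int.units_mul_self, map_one]

theorem ztOfUnits_commute {n : ℕ} (u : ℤˣ) (x : SpinSym n) : Commute (ztOfUnits n u) x :=
  (zt_commute x).pow_left _

/-- The action of `S̃ₙ` on itself by conjugation twisted by a character `χ` with values `±1`:
an element `x` acts by `y ↦ z ^ ε · x y x⁻¹`, where `χ x = (-1) ^ ε`. It is valued in permutations,
not automorphisms, because left multiplication by `z` is not multiplicative. -/
def twistedConj {n : ℕ} (χ : SpinSym n →* ℤˣ) : SpinSym n →* Perm (SpinSym n) where
  toFun x := Equiv.mulLeft (ztOfUnits n (χ x)) * (MulAut.conj x).toEquiv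
  map_one' := by
    ext y
    simp
  map_mul' x y := by
    ext w
    simp [mul_assoc, (ztOfUnits_commute (χ y) x).left_comm]

theorem twistedConj_apply {n : ℕ} (χ : SpinSym n →* ℤˣ) (x y : SpinSym n) :
    twistedConj χ x y = ztOfUnits n (χ x) * (x * y * x⁻¹) := rfl

theorem twistedConj_zt {n : ℕ} {χ : SpinSym n →* ℤˣ} (hχ : χ (zt n) = 1) :
    twistedConj χ (zt n) = 1 := by
  ext y
  rw [twistedConj_apply, hχ, map_one, one_mul, (zt_commute y).mul_inv_cancel, Perm.one_apply]

theorem twistedConj_tt {n : ℕ} {χ : SpinSym n →* ℤˣ} {k : Fin (n - 1)} (hχ : χ (tt n k) = -1)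
    (y : SpinSym n) : twistedConj χ (tt n k) y = sandwich n k y := by
  rw [twistedConj_apply, hχ, ztOfUnits_neg_one, sandwich_eq_zt_mul_conj (by omega),
    ttN_of_lt (by omega)]

theorem val_swap_finL_finR {n : ℕ} (k : Fin (n - 1)) (i : Fin n) :
    (swap (finL n k) (finR n k) i : ℕ) = swap (k : ℕ) (k + 1) i :=
  (Fin.val_injective.swap_apply _ _ _).symm

theorem twistedConj_ttil {n : ℕ} {p : SpinSym n →* Perm (Fin n)}
    (hpt : ∀ k, p (tt n k) = swap (finL n k) (finR n k)) (hpz : p (zt n) = 1)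
    (x : SpinSym n) {i j : Fin n} (hij : i ≠ j) :
    twistedConj (Perm.sign.comp p) x (ttil n i j) = ttil n (p x i) (p x j) := by
  induction x using SpinSym.induction_on generalizing i j with
  | zt => simp [twistedConj_zt, hpz]
  | tt k =>
    have hsign : Perm.sign.comp p (tt n k) = -1 := by
      rw [MonoidHom.comp_apply, hpt, Perm.sign_swap (by simp [finL, finR])]
    rw [twistedConj_tt hsign, hpt, val_swap_finL_finR, val_swap_finL_finR,
      sandwich_ttil (by omega) i.2 j.2 (Fin.val_ne_of_ne hij)]
  | one => simp
  | mul x y hx hy =>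
    simp only [map_mul, Perm.mul_apply]
    rw [hy hij, hx ((p y).injective.ne hij)]
  | inv x hx =>
    rw [map_inv, map_inv, Perm.inv_eq_iff_eq, hx ((p x)⁻¹.injective.ne hij),
      Perm.coe_inv, apply_symm_apply, apply_symm_apply]

theorem conjugation_formula (n : ℕ) (hn : 2 ≤ n)
    (p : SpinSym n →* Equiv.Perm (Fin n))
    (hpt : ∀ i : Fin (n-1), p (tt n i) = Equiv.swap (finL n i) (finR n i))
    (hpz : p (zt n) = 1)
    (x : SpinSym n) (i j : Fin n) (hij : i ≠ j) :
    x * ttil n i.val j.val * x⁻¹ =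
      zt n ^ (if Equiv.Perm.sign (p x) = 1 then 0 else 1) *
        ttil n ((p x) i).val ((p x) j).val := by
  rw [← twistedConj_ttil hpt hpz x hij, twistedConj_apply, MonoidHom.comp_apply,
    ← ztOfUnits_apply, ← mul_assoc (ztOfUnits n _), ztOfUnits_mul_self, one_mul]
end
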